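/- Let ψ be a Cartan–Hadamard model function. For every α > 0 there exists a global radial solution u with initial datum α; moreover, every global radial solution u satisfies u(r) > 0 for all r ≥ 0 and u′(r) < 0 for all r > 0. -/

import Mathlib

open Real Filter MeasureTheory
open scoped ENNReal Topology

/-- The volume-to-surface ratio `Θ(r) = (∫₀ʳ ψ(s)^{n-1} ds) / ψ(r)^{n-1}`. -/
noncomputable def Theta (n : ℕ) (ψ : ℝ → ℝ) (r : ℝ) : ℝ :=
  (∫ s in (0:ℝ)..r, ψ s ^ (n - 1)) / ψ r ^ (n - 1)

/-- A Cartan–Hadamard model function: smooth, `ψ(0)=0`, `ψ'(0)=1`, convex on `[0,∞)`,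
positive on `(0,∞)`. -/
def IsCHModel (ψ : ℝ → ℝ) : Prop :=
  ContDiff ℝ (⊤ : ℕ∞) ψ ∧ ψ 0 = 0 ∧ deriv ψ 0 = 1 ∧
    (∀ r : ℝ, 0 ≤ r → 0 ≤ deriv (deriv ψ) r) ∧ (∀ r : ℝ, 0 < r → 0 < ψ r)

/-- A radial solution on `[0,T)` (with `T ∈ (0,∞]`) with initial datum `α`:
`u ∈ C¹([0,T))`, `u(0)=α`, `u'(0)=0`, `u>0` on `[0,T)`, and
`(ψ^{n-1} |u'|^{p-2} u')' = -ψ^{n-1} u^q` on `(0,T)`. -/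
structure IsRadialSolution (n : ℕ) (p q : ℝ) (ψ : ℝ → ℝ) (T : ℝ≥0∞) (α : ℝ)
    (u : ℝ → ℝ) : Prop where
  init : u 0 = α
  deriv_init : deriv u 0 = 0
  pos : ∀ r : ℝ, 0 ≤ r → ENNReal.ofReal r < T → 0 < u r
  diff : ∀ r : ℝ, 0 ≤ r → ENNReal.ofReal r < T → DifferentiableAt ℝ u r
  deriv_cont : ContinuousOn (deriv u) {r : ℝ | 0 ≤ r ∧ ENNReal.ofReal r < T}
  eqn : ∀ r : ℝ, 0 < r → ENNReal.ofReal r < T →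
    HasDerivAt (fun s => ψ s ^ (n - 1) * |deriv u s| ^ (p - 2) * deriv u s)
      (-(ψ r ^ (n - 1) * u r ^ q)) r

/-- The energy function `F_u(r) = ((p-1)/p)|u'(r)|^p + u(r)^{q+1}/(q+1)`. -/
noncomputable def energyF (p q : ℝ) (u : ℝ → ℝ) (r : ℝ) : ℝ :=
  (p - 1) / p * |deriv u r| ^ p + u r ^ (q + 1) / (q + 1)

/-- The Pohozaev function
`P_u(r) = (∫₀ʳ ψ^{n-1}) F_u(r) + (ψ(r)^{n-1}/(q+1)) |u'(r)|^{p-2} u'(r) u(r)`. -/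
noncomputable def pohozaevP (n : ℕ) (p q : ℝ) (ψ u : ℝ → ℝ) (r : ℝ) : ℝ :=
  (∫ s in (0:ℝ)..r, ψ s ^ (n - 1)) * energyF p q u r +
    ψ r ^ (n - 1) / (q + 1) * (|deriv u r| ^ (p - 2) * deriv u r * u r)

/-- `K(r) = ((p-1)/p + 1/(q+1)) ψ(r)^{n-1} - (n-1)(ψ'(r)/ψ(r)) ∫₀ʳ ψ^{n-1}`. -/
noncomputable def Kfun (n : ℕ) (p q : ℝ) (ψ : ℝ → ℝ) (r : ℝ) : ℝ :=
  ((p - 1) / p + 1 / (q + 1)) * ψ r ^ (n - 1) -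
    ((n : ℝ) - 1) * (deriv ψ r / ψ r) * ∫ s in (0:ℝ)..r, ψ s ^ (n - 1)

/-- Condition (a): `r^γ ψ'(r)/ψ(r) → ℓ ∈ (0,∞)` for some `γ ∈ [0,1)`. -/
def CondA (ψ : ℝ → ℝ) : Prop :=
  ∃ γ ℓ : ℝ, 0 ≤ γ ∧ γ < 1 ∧ 0 < ℓ ∧
    Tendsto (fun r : ℝ => r ^ γ * deriv ψ r / ψ r) atTop (nhds ℓ)

/-- Condition (b): `ψ'/ψ → +∞` and `(ψ/ψ') (log(ψ'/ψ))' → 0`. -/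
def CondB (ψ : ℝ → ℝ) : Prop :=
  Tendsto (fun r : ℝ => deriv ψ r / ψ r) atTop atTop ∧
    Tendsto (fun r : ℝ => ψ r / deriv ψ r *
      deriv (fun s : ℝ => Real.log (deriv ψ s / ψ s)) r) atTop (nhds 0)

/-!
Convexity of `ψ` makes `ψ'` nondecreasing, so `ψ ^ n ≤ n ψ' ∫₀ʳ ψ ^ (n - 1)`; together with
`q + 1 ≥ n p / (n - p)` this gives `K ≤ 0`. As `P_u' = K |u'| ^ p`, the Pohozaev function of a
radial solution is nonpositive, which bounds `-u'` by `C u V' / V`, where `V r = ∫₀ʳ ψ ^ (n - 1)`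
and `C = p / ((p - 1) (q + 1))`. So `u V ^ C` is nondecreasing, while the energy bounds the slope
of `u` near `0`: every radial solution with datum `α`, on any interval `[0, T)`, lies above one
positive barrier `δ`.

Existence is obtained without continuation of local solutions. Replacing `u` by `max u (δ / 2)` in
the integral equation removes its singularity, and the resulting Volterra equation has a global
solution. As long as this stays above `δ / 2` it is a radial solution, hence stays above `δ`, so it
never reaches the truncation level.
-/

open scoped BoundedContinuousFunction

theorem le_of_forall_hasDerivAt_nonneg {f f' : ℝ → ℝ} {a b : ℝ} (hab : a ≤ b)
    (hf : ContinuousOn f (Set.Icc a b)) (hf' : ∀ x ∈ Set.Ioo a b, HasDerivAt f (f' x) x)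
    (hnonneg : ∀ x ∈ Set.Ioo a b, 0 ≤ f' x) : f a ≤ f b :=
  monotoneOn_of_hasDerivWithinAt_nonneg (f' := f') (convex_Icc a b) hf
    (fun x hx => (hf' x (by rwa [interior_Icc] at hx)).hasDerivWithinAt)
    (fun x hx => hnonneg x (by rwa [interior_Icc] at hx))
    (Set.left_mem_Icc.2 hab) (Set.right_mem_Icc.2 hab) hab

theorem le_of_forall_hasDerivAt_nonpos {f f' : ℝ → ℝ} {a b : ℝ} (hab : a ≤ b)
    (hf : ContinuousOn f (Set.Icc a b)) (hf' : ∀ x ∈ Set.Ioo a b, HasDerivAt f (f' x) x)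
    (hnonpos : ∀ x ∈ Set.Ioo a b, f' x ≤ 0) : f b ≤ f a :=
  antitoneOn_of_hasDerivWithinAt_nonpos (f' := f') (convex_Icc a b) hf
    (fun x hx => (hf' x (by rwa [interior_Icc] at hx)).hasDerivWithinAt)
    (fun x hx => hnonpos x (by rwa [interior_Icc] at hx))
    (Set.left_mem_Icc.2 hab) (Set.right_mem_Icc.2 hab) hab

theorem forall_lt_of_forall_Ico_lt {f g : ℝ → ℝ} {a : ℝ} (hf : Continuous f) (hg : Continuous g)
    (ha : f a < g a) (hstep : ∀ b, a < b → (∀ x ∈ Set.Ico a b, f x < g x) → f b < g b) :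
    ∀ x, a ≤ x → f x < g x := by
  by_contra! hex
  let S : Set ℝ := {x | a ≤ x ∧ g x ≤ f x}
  have hS_bdd : BddBelow S := ⟨a, fun x hx => hx.1⟩
  have hS_closed : IsClosed S := isClosed_Ici.inter (isClosed_le hg hf)
  obtain ⟨hinf, hle⟩ : sInf S ∈ S := hS_closed.csInf_mem hex hS_bdd
  refine (hstep _ (hinf.lt_of_ne fun h => ?_) fun x hx => ?_).not_ge hle
  · exact ha.not_ge (h ▸ hle)
  · exact not_le.1 fun hx_le => notMem_of_lt_csInf hx.2 hS_bdd ⟨hx.1, hx_le⟩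

theorem continuous_abs_rpow_sub_two_mul_self {p : ℝ} (hp : 1 < p) :
    Continuous fun x : ℝ => |x| ^ (p - 2) * x := by
  have hderiv : deriv (fun x : ℝ => ‖x‖ ^ p) = fun x => p * (|x| ^ (p - 2) * x) := by
    ext x
    rw [← mul_assoc]
    exact (hasDerivAt_abs_rpow x hp).deriv
  have hcont : Continuous fun x : ℝ => p * (|x| ^ (p - 2) * x) :=
    hderiv ▸ (contDiff_norm_rpow hp).continuous_deriv le_rfl
  simpa [(zero_lt_one.trans hp).ne'] using hcont.const_mul p⁻¹

theorem abs_rpow_sub_two_mul_self_of_nonpos {p x : ℝ} (hp : p ≠ 1) (hx : x ≤ 0) :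
    |x| ^ (p - 2) * x = -|x| ^ (p - 1) := by
  rcases hx.lt_or_eq with hx | rfl
  · rw [show p - 1 = p - 2 + 1 by ring, rpow_add_one (abs_ne_zero.2 hx.ne), abs_of_neg hx]
    ring
  · simp [sub_ne_zero.2 hp]

theorem abs_rpow_sub_rpow_le_of_mem_Icc {a b x y β : ℝ} (ha : 0 < a) (hβ : 0 ≤ β)
    (hx : x ∈ Set.Icc a b) (hy : y ∈ Set.Icc a b) :
    |x ^ β - y ^ β| ≤ β * (a ^ (β - 1) + b ^ (β - 1)) * |x - y| := by
  refine Convex.norm_image_sub_le_of_norm_hasDerivWithin_le (f := fun t : ℝ => t ^ β)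
    (f' := fun t => β * t ^ (β - 1))
    (fun t ht => (hasDerivAt_rpow_const (Or.inl (ha.trans_le ht.1).ne')).hasDerivWithinAt)
    (fun t ht => ?_) (convex_Icc a b) hy hx
  have ht0 : 0 < t := ha.trans_le ht.1
  have hb : 0 < b := ht0.trans_le ht.2
  rw [Real.norm_eq_abs, abs_of_nonneg (by positivity)]
  refine mul_le_mul_of_nonneg_left ?_ hβ
  rcases le_total 0 (β - 1) with h | h
  · exact (rpow_le_rpow ht0.le ht.2 h).trans (le_add_of_nonneg_left (by positivity))
  · exact (rpow_le_rpow_of_nonpos ha ht.1 h).trans (le_add_of_nonneg_right (by positivity))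

theorem integral_eq_zero_of_nonpos {f : ℝ → ℝ} (hf : ∀ s ≤ 0, f s = 0) {r : ℝ} (hr : r ≤ 0) :
    ∫ s in (0 : ℝ)..r, f s = 0 := by
  rw [intervalIntegral.integral_congr (g := fun _ => 0) fun s hs => hf s
    (Set.uIcc_of_ge hr ▸ hs).2, intervalIntegral.integral_zero]

theorem integral_mul_exp_two_mul_integral {L : ℝ → ℝ} (hL : Continuous L) (a b : ℝ) :
    ∫ s in a..b, L s * exp (2 * ∫ t in a..s, L t) = (exp (2 * ∫ s in a..b, L s) - 1) / 2 := by
  have hderiv : ∀ s, HasDerivAt (fun s => exp (2 * ∫ t in a..s, L t) / 2)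
      (L s * exp (2 * ∫ t in a..s, L t)) s := fun s =>
    (((hL.integral_hasStrictDerivAt a s).hasDerivAt.const_mul 2).exp.div_const 2).congr_deriv
      (by ring)
  have hprim : Continuous fun s => ∫ t in a..s, L t :=
    intervalIntegral.continuous_primitive (fun _ _ => hL.intervalIntegrable _ _) a
  rw [intervalIntegral.integral_eq_sub_of_hasDerivAt (fun s _ => hderiv s)
    ((hL.mul (continuous_exp.comp (hprim.const_mul 2))).intervalIntegrable a b)]
  simp [sub_div]

/- Bielecki's trick: in the norm `sup ‖h‖ / W` the map `A` is a contraction. -/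
theorem exists_fixedPoint_of_weighted_contraction {X E : Type*} [TopologicalSpace X]
    [NormedAddCommGroup E] [NormedSpace ℝ E] [CompleteSpace E] {W : X → ℝ} (hW : Continuous W)
    (hW_one : ∀ x, 1 ≤ W x) {K : NNReal} (hK : K < 1) (A : C(X, E) → X →ᵇ E)
    (hA : ∀ (h k : C(X, E)) (D : ℝ), 0 ≤ D → (∀ x, ‖h x - k x‖ ≤ D * W x) →
      ∀ x, ‖A h x - A k x‖ ≤ K * D * W x) :
    ∃ h : C(X, E), ⇑(A h) = h := by
  have hW_pos : ∀ x, 0 < W x := fun x => zero_lt_one.trans_le (hW_one x)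
  let scale (v : X →ᵇ E) : C(X, E) := ⟨fun x => W x • v x, hW.smul v.continuous⟩
  let Φ (v : X →ᵇ E) : X →ᵇ E := BoundedContinuousFunction.ofNormedAddCommGroup
    (fun x => (W x)⁻¹ • A (scale v) x)
    ((hW.inv₀ fun x => (hW_pos x).ne').smul (A (scale v)).continuous) ‖A (scale v)‖ fun x => by
      rw [norm_smul, norm_inv, Real.norm_of_nonneg (hW_pos x).le]
      exact (mul_le_of_le_one_left (norm_nonneg _) (inv_le_one_of_one_le₀ (hW_one x))).trans
        ((A (scale v)).norm_coe_le_norm x)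
  have hΦ : ContractingWith K Φ := by
    refine ⟨hK, LipschitzWith.of_dist_le_mul fun v v' => ?_⟩
    refine (BoundedContinuousFunction.dist_le (by positivity)).2 fun x => ?_
    have hscale : ∀ x, ‖scale v x - scale v' x‖ ≤ dist v v' * W x := fun x => by
      change ‖W x • v x - W x • v' x‖ ≤ _
      rw [← smul_sub, norm_smul, Real.norm_of_nonneg (hW_pos x).le, ← dist_eq_norm, mul_comm]
      exact mul_le_mul_of_nonneg_right (v.dist_coe_le_dist x) (hW_pos x).le
    change dist ((W x)⁻¹ • A (scale v) x) ((W x)⁻¹ • A (scale v') x) ≤ _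
    rw [dist_eq_norm, ← smul_sub, norm_smul, norm_inv, Real.norm_of_nonneg (hW_pos x).le,
      inv_mul_le_iff₀ (hW_pos x), mul_comm (W x)]
    exact hA _ _ _ dist_nonneg hscale x
  let v := ContractingWith.fixedPoint Φ hΦ
  have hv : Φ v = v := hΦ.fixedPoint_isFixedPt
  refine ⟨scale v, funext fun x => ?_⟩
  calc A (scale v) x = W x • Φ v x := (smul_inv_smul₀ (hW_pos x).ne' _).symm
    _ = scale v x := by rw [hv]; rfl

/-- The density `w` of geodesic spheres as a function of the radius, extended by zero to
nonpositive radii so that the functions built from it live on all of `ℝ`. -/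
structure IsRadialWeight (w : ℝ → ℝ) : Prop where
  continuous : Continuous w
  monotone : Monotone w
  zero_of_nonpos : ∀ r ≤ 0, w r = 0
  pos : ∀ r, 0 < r → 0 < w r

/-- The flux `w(r)⁻¹ ∫₀ʳ w f` through the sphere of radius `r` of a radial vector field whose
divergence with respect to the density `w` is `f`. Division by zero makes it `0` where `w r = 0`. -/
noncomputable def radialFlux (w f : ℝ → ℝ) (r : ℝ) : ℝ :=
  (∫ s in (0 : ℝ)..r, w s * f s) / w r

/-- The solution `u` of `-(w |u'|^{p-2} u')' = w f` with `u(0) = α` and `u'(0) = 0`, for `f ≥ 0` and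
`β = 1 / (p - 1)`. -/
noncomputable def radialProfile (w : ℝ → ℝ) (β α : ℝ) (f : ℝ → ℝ) (r : ℝ) : ℝ :=
  α - ∫ s in (0 : ℝ)..r, radialFlux w f s ^ β

theorem radialFlux_const (w : ℝ → ℝ) (c r : ℝ) :
    radialFlux w (fun _ => c) r = c * radialFlux w (fun _ => 1) r := by
  simp only [radialFlux, intervalIntegral.integral_mul_const]
  ring

namespace IsRadialWeight

variable {w f g : ℝ → ℝ} {β α r : ℝ} (hw : IsRadialWeight w)

include hw

theorem nonneg (r : ℝ) : 0 ≤ w r :=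
  (le_total r 0).elim (fun h => (hw.zero_of_nonpos r h).ge)
    fun h => hw.zero_of_nonpos 0 le_rfl ▸ hw.monotone h

theorem radialFlux_of_nonpos (f : ℝ → ℝ) (hr : r ≤ 0) : radialFlux w f r = 0 := by
  rw [radialFlux, hw.zero_of_nonpos r hr, div_zero]

theorem intervalIntegrable_mul (hf : Continuous f) (a b : ℝ) :
    IntervalIntegrable (fun s => w s * f s) volume a b :=
  (hw.continuous.mul hf).intervalIntegrable a b

theorem hasDerivAt_integral_mul (hf : Continuous f) (r : ℝ) :
    HasDerivAt (fun r => ∫ s in (0 : ℝ)..r, w s * f s) (w r * f r) r :=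
  ((hw.continuous.mul hf).integral_hasStrictDerivAt 0 r).hasDerivAt

theorem abs_radialFlux_le {M : ℝ} (hr : 0 ≤ r) (hf : ∀ s, 0 ≤ s → s ≤ r → |f s| ≤ M) :
    |radialFlux w f r| ≤ M * r := by
  rcases hr.eq_or_lt with rfl | hr
  · simp [hw.radialFlux_of_nonpos f le_rfl]
  have hbound : ∀ s ∈ Set.uIoc 0 r, ‖w s * f s‖ ≤ w r * M := fun s hs => by
    rw [Set.uIoc_of_le hr.le] at hs
    rw [norm_mul, Real.norm_of_nonneg (hw.nonneg s)]
    exact mul_le_mul (hw.monotone hs.2) (hf s hs.1.le hs.2) (norm_nonneg _) (hw.nonneg r)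
  rw [radialFlux, abs_div, abs_of_pos (hw.pos r hr), div_le_iff₀ (hw.pos r hr)]
  calc |∫ s in (0 : ℝ)..r, w s * f s| ≤ w r * M * |r - 0| :=
        intervalIntegral.norm_integral_le_of_norm_le_const hbound
    _ = M * r * w r := by rw [sub_zero, abs_of_pos hr]; ring

theorem continuous_radialFlux (hf : Continuous f) : Continuous (radialFlux w f) := by
  refine continuous_iff_continuousAt.2 fun r => ?_
  rcases lt_trichotomy r 0 with hr | rfl | hr
  · refine continuousAt_const.congr (f := fun _ => 0) ?_
    filter_upwards [gt_mem_nhds hr] with s hs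
    rw [hw.radialFlux_of_nonpos f hs.le]
  · obtain ⟨M, hM⟩ := isCompact_Icc.exists_bound_of_continuousOn
      (s := Set.Icc (0 : ℝ) 1) hf.continuousOn
    have hM0 : 0 ≤ M := (norm_nonneg _).trans (hM 0 (by simp))
    rw [ContinuousAt, hw.radialFlux_of_nonpos f le_rfl]
    refine squeeze_zero_norm' (a := fun s => M * |s|) ?_ ?_
    · filter_upwards [gt_mem_nhds zero_lt_one] with s hs
      rcases le_total s 0 with h | h
      · rw [hw.radialFlux_of_nonpos f h, norm_zero]
        positivity
      · rw [abs_of_nonneg h]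
        exact hw.abs_radialFlux_le h fun t ht hts => hM t ⟨ht, hts.trans hs.le⟩
    · exact Continuous.tendsto' (by fun_prop) _ _ (by simp)
  · exact (hw.hasDerivAt_integral_mul hf r).continuousAt.div hw.continuous.continuousAt
      (hw.pos r hr).ne'

theorem radialFlux_mono (hf : Continuous f) (hg : Continuous g)
    (hfg : ∀ s, 0 ≤ s → s ≤ r → f s ≤ g s) : radialFlux w f r ≤ radialFlux w g r := by
  rcases le_total r 0 with hr | hr
  · rw [hw.radialFlux_of_nonpos f hr, hw.radialFlux_of_nonpos g hr]
  · exact div_le_div_of_nonneg_right (intervalIntegral.integral_mono_on hr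
      (hw.intervalIntegrable_mul hf 0 r) (hw.intervalIntegrable_mul hg 0 r) fun s hs =>
        mul_le_mul_of_nonneg_left (hfg s hs.1 hs.2) (hw.nonneg s)) (hw.nonneg r)

theorem radialFlux_nonneg (hf : ∀ s, 0 ≤ s → s ≤ r → 0 ≤ f s) : 0 ≤ radialFlux w f r := by
  rcases le_total r 0 with hr | hr
  · rw [hw.radialFlux_of_nonpos f hr]
  · exact div_nonneg (intervalIntegral.integral_nonneg hr fun s hs =>
      mul_nonneg (hw.nonneg s) (hf s hs.1 hs.2)) (hw.nonneg r)

theorem radialFlux_pos (hf : Continuous f) (hr : 0 < r) (hf_pos : ∀ s, 0 < s → s < r → 0 < f s) :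
    0 < radialFlux w f r :=
  div_pos (intervalIntegral.intervalIntegral_pos_of_pos_on (hw.intervalIntegrable_mul hf 0 r)
    (fun s hs => mul_pos (hw.pos s hs.1) (hf_pos s hs.1 hs.2)) hr) (hw.pos r hr)

theorem radialFlux_one_le (hr : 0 ≤ r) : radialFlux w (fun _ => 1) r ≤ r :=
  (le_abs_self _).trans <| (hw.abs_radialFlux_le hr fun _ _ _ => abs_one.le).trans_eq (one_mul r)

theorem abs_radialFlux_sub_le {D : ℝ} (hf : Continuous f) (hg : Continuous g)
    (hfg : ∀ s, 0 ≤ s → s ≤ r → |f s - g s| ≤ D) :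
    |radialFlux w f r - radialFlux w g r| ≤ D * radialFlux w (fun _ => 1) r := by
  have hsub : radialFlux w f r - radialFlux w g r = radialFlux w (fun s => f s - g s) r := by
    simp only [radialFlux, mul_sub, ← sub_div]
    rw [intervalIntegral.integral_sub (hw.intervalIntegrable_mul hf 0 r)
      (hw.intervalIntegrable_mul hg 0 r)]
  rw [hsub, abs_le, ← neg_mul, ← radialFlux_const, ← radialFlux_const]
  exact ⟨hw.radialFlux_mono continuous_const (hf.sub hg) fun s h0 hr => (abs_le.1 (hfg s h0 hr)).1,
    hw.radialFlux_mono (hf.sub hg) continuous_const fun s h0 hr => (abs_le.1 (hfg s h0 hr)).2⟩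

theorem radialFlux_mem_Icc {c M : ℝ} (hf : Continuous f)
    (hfI : ∀ s, 0 ≤ s → s ≤ r → f s ∈ Set.Icc c M) :
    radialFlux w f r ∈
      Set.Icc (c * radialFlux w (fun _ => 1) r) (M * radialFlux w (fun _ => 1) r) := by
  rw [← radialFlux_const, ← radialFlux_const]
  exact ⟨hw.radialFlux_mono continuous_const hf fun s h0 hr => (hfI s h0 hr).1,
    hw.radialFlux_mono hf continuous_const fun s h0 hr => (hfI s h0 hr).2⟩

theorem abs_radialFlux_rpow_sub_le {c M D : ℝ} (hβ : 0 ≤ β) (hc : 0 < c) (hr : 0 < r)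
    (hf : Continuous f) (hfI : ∀ s, 0 ≤ s → s ≤ r → f s ∈ Set.Icc c M)
    (hg : Continuous g) (hgI : ∀ s, 0 ≤ s → s ≤ r → g s ∈ Set.Icc c M)
    (hfg : ∀ s, 0 ≤ s → s ≤ r → |f s - g s| ≤ D) :
    |radialFlux w f r ^ β - radialFlux w g r ^ β| ≤
      r ^ β * (β * (c ^ (β - 1) + M ^ (β - 1)) * D) := by
  have hM : 0 < M := hc.trans_le ((hfI r hr.le le_rfl).1.trans (hfI r hr.le le_rfl).2)
  have hD : 0 ≤ D := (abs_nonneg _).trans (hfg r hr.le le_rfl)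
  have hΘ : 0 < radialFlux w (fun _ => 1) r :=
    hw.radialFlux_pos continuous_const hr fun _ _ _ => one_pos
  have hΘr := hw.radialFlux_one_le hr.le
  have hfgΘ := hw.abs_radialFlux_sub_le hf hg hfg
  have hfΘ := hw.radialFlux_mem_Icc hf hfI
  have hgΘ := hw.radialFlux_mem_Icc hg hgI
  generalize radialFlux w (fun _ => 1) r = Θ at *
  calc |radialFlux w f r ^ β - radialFlux w g r ^ β|
      ≤ β * ((c * Θ) ^ (β - 1) + (M * Θ) ^ (β - 1)) *
          |radialFlux w f r - radialFlux w g r| :=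
        abs_rpow_sub_rpow_le_of_mem_Icc (mul_pos hc hΘ) hβ hfΘ hgΘ
    _ ≤ β * ((c * Θ) ^ (β - 1) + (M * Θ) ^ (β - 1)) * (D * Θ) := by gcongr
    _ = Θ ^ β * (β * (c ^ (β - 1) + M ^ (β - 1)) * D) := by
        rw [mul_rpow hc.le hΘ.le, mul_rpow hM.le hΘ.le, rpow_sub_one hΘ.ne' β]
        field_simp
    _ ≤ r ^ β * (β * (c ^ (β - 1) + M ^ (β - 1)) * D) := by gcongr

theorem continuous_radialFlux_rpow (hf : Continuous f) (hβ : 0 ≤ β) :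
    Continuous fun r => radialFlux w f r ^ β :=
  (hw.continuous_radialFlux hf).rpow_const fun _ => Or.inr hβ

theorem hasDerivAt_radialProfile (hf : Continuous f) (hβ : 0 ≤ β) (α r : ℝ) :
    HasDerivAt (radialProfile w β α f) (-(radialFlux w f r ^ β)) r :=
  ((hw.continuous_radialFlux_rpow hf hβ).integral_hasStrictDerivAt 0 r).hasDerivAt.const_sub α

theorem radialProfile_of_nonpos (hβ : 0 < β) (α : ℝ) (f : ℝ → ℝ) (hr : r ≤ 0) :
    radialProfile w β α f r = α := by
  rw [radialProfile, integral_eq_zero_of_nonpos (fun s hs => ?_) hr, sub_zero]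
  rw [hw.radialFlux_of_nonpos f hs, zero_rpow hβ.ne']

theorem radialProfile_le (hβ : 0 < β) (α : ℝ) (hf : ∀ s, 0 ≤ f s) (r : ℝ) :
    radialProfile w β α f r ≤ α := by
  rcases le_total r 0 with hr | hr
  · exact (hw.radialProfile_of_nonpos hβ α f hr).le
  · exact sub_le_self α <| intervalIntegral.integral_nonneg hr fun s _ =>
      rpow_nonneg (hw.radialFlux_nonneg fun t _ _ => hf t) β

end IsRadialWeight

/-- The kernel of the Volterra estimate for `h ↦ radialProfile w β α (h ^ q)` on functions with
`δ ≤ h ≤ α`: a Lipschitz bound for `x ↦ x ^ q` on `[δ s, α]` and one for `y ↦ y ^ β` on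
`[δ s ^ q, α ^ q]`, times a bound for the flux. It vanishes on `(-∞, 0]`. -/
noncomputable def profileKernel (β q α : ℝ) (δ : ℝ → ℝ) (s : ℝ) : ℝ :=
  (max s 0) ^ β * (β * ((δ s ^ q) ^ (β - 1) + (α ^ q) ^ (β - 1)) *
    (q * (δ s ^ (q - 1) + α ^ (q - 1))))

section Truncation

variable {w δ : ℝ → ℝ} {β q α : ℝ}

theorem profileKernel_of_nonpos (hβ : β ≠ 0) (q α : ℝ) (δ : ℝ → ℝ) {s : ℝ} (hs : s ≤ 0) :
    profileKernel β q α δ s = 0 := by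
  rw [profileKernel, max_eq_right hs, zero_rpow hβ, zero_mul]

theorem profileKernel_nonneg (hβ : 0 ≤ β) (hq : 0 ≤ q) {s : ℝ} (hδ : 0 ≤ δ s) (hα : 0 ≤ α) :
    0 ≤ profileKernel β q α δ s := by
  have := le_max_right s 0
  unfold profileKernel
  positivity

theorem continuous_profileKernel (hβ : 0 ≤ β) (q α : ℝ) (hδ : Continuous δ)
    (hδ_pos : ∀ s, 0 < δ s) : Continuous (profileKernel β q α δ) := by
  have hmax : Continuous fun s : ℝ => (max s 0) ^ β :=
    (continuous_id.max continuous_const).rpow_const fun _ => Or.inr hβ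
  have hpow : ∀ γ : ℝ, Continuous fun s => δ s ^ γ := fun γ =>
    hδ.rpow_const fun s => Or.inl (hδ_pos s).ne'
  have hpow' : Continuous fun s => (δ s ^ q) ^ (β - 1) :=
    (hpow q).rpow_const fun s => Or.inl (rpow_pos_of_pos (hδ_pos s) q).ne'
  exact hmax.mul (((hpow'.add continuous_const).const_mul β).mul
    (((hpow (q - 1)).add continuous_const).const_mul q))

theorem continuous_integral_profileKernel (hβ : 0 ≤ β) (q α : ℝ) (hδ : Continuous δ)
    (hδ_pos : ∀ s, 0 < δ s) :
    Continuous fun r => ∫ s in (0 : ℝ)..r, profileKernel β q α δ s :=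
  intervalIntegral.continuous_primitive
    (fun a b => (continuous_profileKernel hβ q α hδ hδ_pos).intervalIntegrable a b) 0

theorem integral_profileKernel_nonneg (hβ : 0 < β) (hq : 0 ≤ q) (hδ : ∀ s, 0 ≤ δ s)
    (hα : 0 ≤ α) (r : ℝ) : 0 ≤ ∫ s in (0 : ℝ)..r, profileKernel β q α δ s :=
  (le_total r 0).elim
    (fun hr => (integral_eq_zero_of_nonpos
      (fun _ hs => profileKernel_of_nonpos hβ.ne' q α δ hs) hr).ge)
    fun hr => intervalIntegral.integral_nonneg hr fun s _ =>
      profileKernel_nonneg hβ.le hq (hδ s) hα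

namespace IsRadialWeight

theorem abs_radialProfile_sub_le (hw : IsRadialWeight w) (hβ : 0 < β) (hq : 0 < q)
    (hδ : Continuous δ) (hδ_anti : Antitone δ) (hδ_pos : ∀ s, 0 < δ s) {h k N : ℝ → ℝ}
    (hh : Continuous h) (hhI : ∀ s, h s ∈ Set.Icc (δ s) α)
    (hk : Continuous k) (hkI : ∀ s, k s ∈ Set.Icc (δ s) α)
    (hN : Continuous N) (hN_mono : Monotone N) (hhk : ∀ s, |h s - k s| ≤ N s)
    {r : ℝ} (hr : 0 ≤ r) :
    |radialProfile w β α (fun s => h s ^ q) r - radialProfile w β α (fun s => k s ^ q) r| ≤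
      ∫ s in (0 : ℝ)..r, profileKernel β q α δ s * N s := by
  have hhq : Continuous fun s => h s ^ q := hh.rpow_const fun _ => Or.inr hq.le
  have hkq : Continuous fun s => k s ^ q := hk.rpow_const fun _ => Or.inr hq.le
  rw [radialProfile, radialProfile, sub_sub_sub_cancel_left, abs_sub_comm,
    ← intervalIntegral.integral_sub
      ((hw.continuous_radialFlux_rpow hhq hβ.le).intervalIntegrable 0 r)
      ((hw.continuous_radialFlux_rpow hkq hβ.le).intervalIntegrable 0 r), ← Real.norm_eq_abs]
  refine intervalIntegral.norm_integral_le_of_norm_le hr (ae_of_all _ fun s hs => ?_)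
    (((continuous_profileKernel hβ.le q α hδ hδ_pos).mul hN).intervalIntegrable 0 r)
  have hmem : ∀ v : ℝ → ℝ, (∀ t, v t ∈ Set.Icc (δ t) α) → ∀ t ≤ s, v t ∈ Set.Icc (δ s) α :=
    fun v hv t ht => ⟨(hδ_anti ht).trans (hv t).1, (hv t).2⟩
  have hmem_rpow : ∀ v : ℝ → ℝ, (∀ t, v t ∈ Set.Icc (δ t) α) → ∀ t, 0 ≤ t → t ≤ s →
      v t ^ q ∈ Set.Icc (δ s ^ q) (α ^ q) := fun v hv t _ ht =>
    ⟨rpow_le_rpow (hδ_pos s).le (hmem v hv t ht).1 hq.le,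
      rpow_le_rpow ((hδ_pos t).le.trans (hv t).1) (hv t).2 hq.le⟩
  have hα : 0 < α := (hδ_pos 0).trans_le ((hhI 0).1.trans (hhI 0).2)
  have hrpow : ∀ t, 0 ≤ t → t ≤ s →
      |h t ^ q - k t ^ q| ≤ q * (δ s ^ (q - 1) + α ^ (q - 1)) * N s := fun t _ ht => by
    have := hδ_pos s
    exact (abs_rpow_sub_rpow_le_of_mem_Icc (hδ_pos s) hq.le (hmem h hhI t ht)
      (hmem k hkI t ht)).trans (mul_le_mul_of_nonneg_left ((hhk t).trans (hN_mono ht))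
        (by positivity))
  refine (hw.abs_radialFlux_rpow_sub_le hβ.le (rpow_pos_of_pos (hδ_pos s) q) hs.1 hhq
    (hmem_rpow h hhI) hkq (hmem_rpow k hkI) hrpow).trans_eq ?_
  rw [profileKernel, max_eq_left hs.1.le]
  ring

theorem abs_max_radialProfile_sub_le (hw : IsRadialWeight w) (hβ : 0 < β) (hq : 0 < q)
    (hδ : Continuous δ) (hδ_anti : Antitone δ) (hδ_pos : ∀ s, 0 < δ s) {h k : ℝ → ℝ}
    (hh : Continuous h) (hhI : ∀ s, h s ∈ Set.Icc (δ s) α)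
    (hk : Continuous k) (hkI : ∀ s, k s ∈ Set.Icc (δ s) α) {D : ℝ} (hD : 0 ≤ D)
    (hhk : ∀ s, |h s - k s| ≤ D * exp (2 * ∫ t in (0 : ℝ)..s, profileKernel β q α δ t))
    (r : ℝ) :
    |max (δ r) (radialProfile w β α (fun s => h s ^ q) r) -
        max (δ r) (radialProfile w β α (fun s => k s ^ q) r)| ≤
      1 / 2 * D * exp (2 * ∫ t in (0 : ℝ)..r, profileKernel β q α δ t) := by
  have hα : 0 < α := (hδ_pos 0).trans_le ((hhI 0).1.trans (hhI 0).2)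
  have hL := continuous_profileKernel hβ.le q α hδ hδ_pos
  rcases le_total r 0 with hr | hr
  · rw [hw.radialProfile_of_nonpos hβ α _ hr, hw.radialProfile_of_nonpos hβ α _ hr, sub_self,
      abs_zero]
    positivity
  have hprim_mono : Monotone fun s => ∫ t in (0 : ℝ)..s, profileKernel β q α δ t :=
    monotone_of_hasDerivAt_nonneg
      (fun s => (hL.integral_hasStrictDerivAt 0 s).hasDerivAt)
      fun s => profileKernel_nonneg hβ.le hq.le (hδ_pos s).le hα.le
  have hprim := continuous_integral_profileKernel hβ.le q α hδ hδ_pos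
  rw [max_comm, max_comm (δ r)]
  calc |max (radialProfile w β α (fun s => h s ^ q) r) (δ r) -
        max (radialProfile w β α (fun s => k s ^ q) r) (δ r)|
      ≤ |radialProfile w β α (fun s => h s ^ q) r - radialProfile w β α (fun s => k s ^ q) r| :=
        abs_max_sub_max_le_abs _ _ _
    _ ≤ ∫ s in (0 : ℝ)..r, profileKernel β q α δ s *
          (D * exp (2 * ∫ t in (0 : ℝ)..s, profileKernel β q α δ t)) :=
        hw.abs_radialProfile_sub_le hβ hq hδ hδ_anti hδ_pos hh hhI hk hkI
          ((continuous_exp.comp (hprim.const_mul 2)).const_mul D)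
          (fun s t hst => mul_le_mul_of_nonneg_left
            (exp_le_exp.2 (mul_le_mul_of_nonneg_left (hprim_mono hst) zero_le_two)) hD) hhk hr
    _ = D * ((exp (2 * ∫ t in (0 : ℝ)..r, profileKernel β q α δ t) - 1) / 2) := by
        rw [← integral_mul_exp_two_mul_integral hL, ← intervalIntegral.integral_const_mul]
        congr 1 with s
        ring
    _ ≤ 1 / 2 * D * exp (2 * ∫ t in (0 : ℝ)..r, profileKernel β q α δ t) := by linarith

theorem exists_truncated_profile (hw : IsRadialWeight w) (hβ : 0 < β) (hq : 0 < q)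
    (hδ : Continuous δ) (hδ_anti : Antitone δ) (hδ_pos : ∀ s, 0 < δ s) (hδα : ∀ s, δ s ≤ α) :
    ∃ h : ℝ → ℝ, Continuous h ∧
      ∀ r, h r = max (δ r) (radialProfile w β α (fun s => h s ^ q) r) := by
  have hα : 0 < α := (hδ_pos 0).trans_le (hδα 0)
  let clamp (h : ℝ → ℝ) (s : ℝ) : ℝ := max (min (h s) α) (δ s)
  have hclamp (h : ℝ → ℝ) (s : ℝ) : clamp h s ∈ Set.Icc (δ s) α :=
    ⟨le_max_right _ _, max_le (min_le_right _ _) (hδα s)⟩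
  have hclamp_cont (h : C(ℝ, ℝ)) : Continuous (clamp h) := by fun_prop
  have hclamp_sub (h k : ℝ → ℝ) (s : ℝ) : |clamp h s - clamp k s| ≤ |h s - k s| :=
    (abs_max_sub_max_le_abs _ _ _).trans ((abs_min_sub_min_le_max _ _ _ _).trans (by simp))
  let T (h : ℝ → ℝ) (r : ℝ) : ℝ := max (δ r) (radialProfile w β α (fun s => clamp h s ^ q) r)
  have hT (h : ℝ → ℝ) (r : ℝ) : T h r ∈ Set.Icc (δ r) α :=
    ⟨le_max_left _ _, max_le (hδα r) (hw.radialProfile_le hβ α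
      (fun s => rpow_nonneg ((hδ_pos s).le.trans (hclamp h s).1) q) r)⟩
  have hT_cont (h : C(ℝ, ℝ)) : Continuous (T h) := hδ.max <| continuous_iff_continuousAt.2 fun r =>
    (hw.hasDerivAt_radialProfile ((hclamp_cont h).rpow_const fun _ => Or.inr hq.le)
      hβ.le α r).continuousAt
  obtain ⟨h, hh⟩ := exists_fixedPoint_of_weighted_contraction
    (W := fun r => exp (2 * ∫ t in (0 : ℝ)..r, profileKernel β q α δ t))
    (continuous_exp.comp ((continuous_integral_profileKernel hβ.le q α hδ hδ_pos).const_mul 2))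
    (fun r => one_le_exp (mul_nonneg zero_le_two
      (integral_profileKernel_nonneg hβ hq.le (fun s => (hδ_pos s).le) hα.le r)))
    (K := 1 / 2) (by norm_num)
    (fun h => BoundedContinuousFunction.ofNormedAddCommGroup (T h) (hT_cont h) α fun r => by
      rw [Real.norm_of_nonneg ((hδ_pos r).le.trans (hT h r).1)]
      exact (hT h r).2)
    (fun h k D hD hhk r => hw.abs_max_radialProfile_sub_le hβ hq hδ hδ_anti hδ_pos
      (hclamp_cont h) (hclamp h) (hclamp_cont k) (hclamp k) hD
      (fun s => (hclamp_sub h k s).trans (hhk s)) r)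
  have hfix (r : ℝ) : T h r = h r := congrFun hh r
  have hclamp_eq : clamp h = h := funext fun s => by
    have := hfix s ▸ hT h s
    simp only [clamp, min_eq_left this.2, max_eq_left this.1]
  exact ⟨h, h.continuous, fun r => by rw [← hfix r]; simp only [T, hclamp_eq]⟩

end IsRadialWeight

end Truncation

/-- A function that may serve as warping function `ψ` of a metric `dr² + ψ(r)² g` of nonpositive
radial curvature, with no regularity assumed of the metric at the pole `r = 0`. -/
structure IsConvexWarping (ψ : ℝ → ℝ) : Prop where
  convexOn : ConvexOn ℝ (Set.Ici 0) ψ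
  differentiableAt : ∀ r, 0 < r → DifferentiableAt ℝ ψ r
  zero : ψ 0 = 0
  pos : ∀ r, 0 < r → 0 < ψ r

theorem IsCHModel.isConvexWarping {ψ : ℝ → ℝ} (hψ : IsCHModel ψ) : IsConvexWarping ψ := by
  obtain ⟨hsmooth, hzero, -, hderiv2, hpos⟩ := hψ
  have hderiv := (contDiff_infty_iff_deriv.1 hsmooth).2
  exact ⟨convexOn_of_deriv2_nonneg' (convex_Ici 0)
    (hsmooth.differentiable (by simp)).differentiableOn
    (hderiv.differentiable (by simp)).differentiableOn hderiv2,
    fun r _ => hsmooth.differentiable (by simp) r, hzero, hpos⟩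

namespace IsConvexWarping

variable {ψ : ℝ → ℝ} {r : ℝ} (hψ : IsConvexWarping ψ)

include hψ

theorem nonneg (hr : 0 ≤ r) : 0 ≤ ψ r :=
  hr.eq_or_lt.elim (fun h => by rw [← h, hψ.zero]) fun h => (hψ.pos r h).le

theorem le_div_mul {s : ℝ} (hs : 0 ≤ s) (hsr : s ≤ r) (hr : 0 < r) : ψ s ≤ s / r * ψ r := by
  have hconv := hψ.convexOn.2 (Set.self_mem_Ici (a := (0 : ℝ))) (Set.mem_Ici.2 hr.le)
    (sub_nonneg.2 ((div_le_one hr).2 hsr)) (div_nonneg hs hr.le) (sub_add_cancel 1 (s / r))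
  simpa [hψ.zero, div_mul_cancel₀ s hr.ne'] using hconv

theorem monotoneOn : MonotoneOn ψ (Set.Ici 0) := fun s hs r _ hsr => by
  rcases (Set.mem_Ici.1 hs).eq_or_lt with rfl | hs_pos
  · rw [hψ.zero]
    exact hψ.nonneg hsr
  · have hr := hs_pos.trans_le hsr
    exact (hψ.le_div_mul hs hsr hr).trans
      (mul_le_of_le_one_left (hψ.pos r hr).le ((div_le_one hr).2 hsr))

theorem continuousOn : ContinuousOn ψ (Set.Ici 0) := fun r hr => by
  rcases (Set.mem_Ici.1 hr).eq_or_lt with rfl | hr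
  · rw [ContinuousWithinAt, hψ.zero]
    refine squeeze_zero' (g := fun s => s / 1 * ψ 1) ?_ ?_ ?_
    · filter_upwards [self_mem_nhdsWithin] with s hs using hψ.nonneg hs
    · filter_upwards [self_mem_nhdsWithin, mem_nhdsWithin_of_mem_nhds (gt_mem_nhds one_pos)]
        with s hs hs1 using hψ.le_div_mul hs hs1.le one_pos
    · exact (Continuous.tendsto' (by fun_prop) _ _ (by simp)).mono_left nhdsWithin_le_nhds
  · exact (hψ.differentiableAt r hr).continuousAt.continuousWithinAt

theorem hasDerivAt (hr : 0 < r) : HasDerivAt ψ (deriv ψ r) r :=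
  (hψ.differentiableAt r hr).hasDerivAt

theorem monotoneOn_deriv : MonotoneOn (deriv ψ) (Set.Ioi 0) :=
  (hψ.convexOn.subset Set.Ioi_subset_Ici_self (convex_Ioi 0)).monotoneOn_deriv hψ.differentiableAt

theorem deriv_pos (hr : 0 < r) : 0 < deriv ψ r := by
  have hslope := hψ.convexOn.slope_le_deriv Set.self_mem_Ici (Set.mem_Ici.2 hr.le) hr
    (hψ.differentiableAt r hr)
  rw [slope_def_field, hψ.zero, sub_zero, sub_zero] at hslope
  exact (div_pos (hψ.pos r hr) hr).trans_le hslope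

theorem continuousOn_pow (m : ℕ) : ContinuousOn (fun s => ψ s ^ m) (Set.Ici 0) :=
  hψ.continuousOn.pow m

theorem intervalIntegrable_pow (m : ℕ) (hr : 0 ≤ r) :
    IntervalIntegrable (fun s => ψ s ^ m) volume 0 r :=
  ((hψ.continuousOn_pow m).mono fun _ hs => (Set.uIcc_of_le hr ▸ hs).1).intervalIntegrable

theorem hasDerivAt_integral_pow (m : ℕ) (hr : 0 < r) :
    HasDerivAt (fun r => ∫ s in (0 : ℝ)..r, ψ s ^ m) (ψ r ^ m) r :=
  intervalIntegral.integral_hasDerivAt_right (hψ.intervalIntegrable_pow m hr.le)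
    (((hψ.continuousOn_pow m).mono Set.Ioi_subset_Ici_self).stronglyMeasurableAtFilter
      isOpen_Ioi r hr)
    ((hψ.continuousOn_pow m).continuousAt (Ici_mem_nhds hr))

theorem continuousOn_integral_pow (m : ℕ) (hr : 0 ≤ r) :
    ContinuousOn (fun r => ∫ s in (0 : ℝ)..r, ψ s ^ m) (Set.Icc 0 r) := by
  have := intervalIntegral.continuousOn_primitive_interval' (hψ.intervalIntegrable_pow m hr)
    Set.left_mem_uIcc
  rwa [Set.uIcc_of_le hr] at this

theorem integral_pow_pos (m : ℕ) (hr : 0 < r) : 0 < ∫ s in (0 : ℝ)..r, ψ s ^ m :=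
  intervalIntegral.intervalIntegral_pos_of_pos_on (hψ.intervalIntegrable_pow m hr.le)
    (fun s hs => pow_pos (hψ.pos s hs.1) m) hr

theorem monotoneOn_integral_pow (m : ℕ) :
    MonotoneOn (fun r => ∫ s in (0 : ℝ)..r, ψ s ^ m) (Set.Ioi 0) := fun a ha b _ hab => by
  have ha : 0 < a := ha
  exact le_of_forall_hasDerivAt_nonneg hab
    ((hψ.continuousOn_integral_pow m (ha.le.trans hab)).mono (Set.Icc_subset_Icc_left ha.le))
    (fun s hs => hψ.hasDerivAt_integral_pow m (ha.trans hs.1))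
    fun s hs => pow_nonneg (hψ.nonneg (ha.trans hs.1).le) m

/- `ψ'` is monotone, so `ψ(r)^(m+1) = ∫₀ʳ (m+1) ψ^m ψ' ≤ (m+1) ψ'(r) ∫₀ʳ ψ^m`. -/
theorem pow_succ_le (m : ℕ) (hr : 0 < r) :
    ψ r ^ (m + 1) ≤ (m + 1) * deriv ψ r * ∫ s in (0 : ℝ)..r, ψ s ^ m := by
  have hle := le_of_forall_hasDerivAt_nonneg hr.le
    (f := fun s => (m + 1) * deriv ψ r * (∫ t in (0 : ℝ)..s, ψ t ^ m) - ψ s ^ (m + 1))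
    (f' := fun s => (m + 1) * deriv ψ r * ψ s ^ m - ((m + 1 : ℕ) : ℝ) * ψ s ^ m * deriv ψ s)
    (((hψ.continuousOn_integral_pow m hr.le).const_mul _).sub
      ((hψ.continuousOn_pow (m + 1)).mono Set.Icc_subset_Ici_self))
    (fun s hs => ((hψ.hasDerivAt_integral_pow m hs.1).const_mul _).sub
      ((hψ.hasDerivAt hs.1).pow (m + 1)))
    (fun s hs => by
      have hderiv := hψ.monotoneOn_deriv (Set.mem_Ioi.2 hs.1) (Set.mem_Ioi.2 hr) hs.2.le
      have hψs := hψ.pos s hs.1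
      calc (0 : ℝ) ≤ (m + 1) * ψ s ^ m * (deriv ψ r - deriv ψ s) :=
            mul_nonneg (by positivity) (sub_nonneg.2 hderiv)
        _ = _ := by push_cast; ring)
  simpa [hψ.zero] using hle

theorem hasDerivAt_pow_sub_one {n : ℕ} (hn : n ≠ 0) (hr : 0 < r) :
    HasDerivAt (fun s => ψ s ^ (n - 1)) (((n : ℝ) - 1) * (deriv ψ r / ψ r) * ψ r ^ (n - 1)) r := by
  obtain ⟨m, rfl⟩ := Nat.exists_eq_succ_of_ne_zero hn
  refine ((hψ.hasDerivAt hr).pow m).congr_deriv ?_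
  have hψr := (hψ.pos r hr).ne'
  cases m with
  | zero => simp
  | succ m =>
    simp only [Nat.succ_sub_one, pow_succ]
    push_cast
    field_simp
    ring

theorem Kfun_nonpos {n : ℕ} (hn : n ≠ 0) {p q : ℝ}
    (hpq : (p - 1) / p + 1 / (q + 1) ≤ ((n : ℝ) - 1) / n) (hr : 0 < r) :
    Kfun n p q ψ r ≤ 0 := by
  obtain ⟨m, rfl⟩ := Nat.exists_eq_succ_of_ne_zero hn
  have hψr := hψ.pos r hr
  have hpow := hψ.pow_succ_le m hr
  rw [Kfun, sub_nonpos]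
  push_cast [Nat.succ_sub_one] at hpq ⊢
  rw [add_sub_cancel_right] at hpq ⊢
  calc ((p - 1) / p + 1 / (q + 1)) * ψ r ^ m ≤ m / (m + 1) * ψ r ^ m := by gcongr
    _ = m / (m + 1) / ψ r * ψ r ^ (m + 1) := by rw [pow_succ]; field_simp
    _ ≤ m / (m + 1) / ψ r * ((m + 1) * deriv ψ r * ∫ s in (0 : ℝ)..r, ψ s ^ m) := by gcongr
    _ = m * (deriv ψ r / ψ r) * ∫ s in (0 : ℝ)..r, ψ s ^ m := by field_simp

theorem isRadialWeight {m : ℕ} (hm : m ≠ 0) : IsRadialWeight fun r => ψ (max r 0) ^ m where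
  continuous := (hψ.continuousOn_pow m).comp_continuous (by fun_prop) fun r => le_max_right r 0
  monotone := fun s r hsr => pow_le_pow_left₀ (hψ.nonneg (le_max_right s 0))
    (hψ.monotoneOn (le_max_right s 0) (le_max_right r 0) (max_le_max_right 0 hsr)) m
  zero_of_nonpos := fun r hr => by rw [max_eq_right hr, hψ.zero, zero_pow hm]
  pos := fun r hr => by
    rw [max_eq_left hr.le]
    exact pow_pos (hψ.pos r hr) m

end IsConvexWarping

namespace IsRadialSolution

variable {n : ℕ} {p q α r : ℝ} {ψ u : ℝ → ℝ} {T : ℝ≥0∞}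
  (hu : IsRadialSolution n p q ψ T α u)

include hu

theorem hasDerivAt (hr : 0 ≤ r) (hrT : ENNReal.ofReal r < T) : HasDerivAt u (deriv u r) r :=
  (hu.diff r hr hrT).hasDerivAt

theorem continuousOn (hrT : ENNReal.ofReal r < T) : ContinuousOn u (Set.Icc 0 r) := fun _ hs =>
  (hu.diff _ hs.1
    ((ENNReal.ofReal_le_ofReal hs.2).trans_lt hrT)).continuousAt.continuousWithinAt

theorem continuousOn_deriv (hrT : ENNReal.ofReal r < T) :
    ContinuousOn (deriv u) (Set.Icc 0 r) :=
  hu.deriv_cont.mono fun _ hs => ⟨hs.1, (ENNReal.ofReal_le_ofReal hs.2).trans_lt hrT⟩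

theorem continuousOn_energyF (hp : 1 < p) (hrT : ENNReal.ofReal r < T) :
    ContinuousOn (energyF p q u) (Set.Icc 0 r) := by
  have hu_ne : ∀ s ∈ Set.Icc 0 r, u s ≠ 0 := fun s hs =>
    (hu.pos s hs.1 ((ENNReal.ofReal_le_ofReal hs.2).trans_lt hrT)).ne'
  exact (((hu.continuousOn_deriv hrT).abs.rpow_const fun _ _ =>
    Or.inr (zero_lt_one.trans hp).le).const_mul _).add
    (((hu.continuousOn hrT).rpow_const fun s hs => Or.inl (hu_ne s hs)).div_const _)

variable (hψ : IsConvexWarping ψ) (hp : 1 < p)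

include hψ hp

theorem deriv_neg (hr : 0 < r) (hrT : ENNReal.ofReal r < T) : deriv u r < 0 := by
  have hflux_anti : StrictAntiOn (fun s => ψ s ^ (n - 1) * |deriv u s| ^ (p - 2) * deriv u s)
      (Set.Icc 0 r) := by
    refine strictAntiOn_of_deriv_neg (convex_Icc 0 r) ?_ fun s hs => ?_
    · simp only [mul_assoc]
      exact ((hψ.continuousOn_pow (n - 1)).mono Set.Icc_subset_Ici_self).mul
        ((continuous_abs_rpow_sub_two_mul_self hp).comp_continuousOn (hu.continuousOn_deriv hrT))
    · rw [interior_Icc] at hs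
      have hsT := (ENNReal.ofReal_le_ofReal hs.2.le).trans_lt hrT
      rw [(hu.eqn s hs.1 hsT).deriv, neg_lt_zero]
      exact mul_pos (pow_pos (hψ.pos s hs.1) _) (rpow_pos_of_pos (hu.pos s hs.1.le hsT) q)
  have hflux_neg := hflux_anti (Set.left_mem_Icc.2 hr.le) (Set.right_mem_Icc.2 hr.le) hr
  simp only [hu.deriv_init, mul_zero] at hflux_neg
  have hψr := hψ.pos r hr
  contrapose! hflux_neg
  positivity

theorem hasDerivAt_abs_deriv_rpow_sub_one (hn : n ≠ 0) (hr : 0 < r)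
    (hrT : ENNReal.ofReal r < T) :
    HasDerivAt (fun s => |deriv u s| ^ (p - 1))
      (u r ^ q - ((n : ℝ) - 1) * (deriv ψ r / ψ r) * |deriv u r| ^ (p - 1)) r := by
  have hflux {s : ℝ} (hs : 0 < s) (hsT : ENNReal.ofReal s < T) :
      -(ψ s ^ (n - 1) * |deriv u s| ^ (p - 2) * deriv u s) / ψ s ^ (n - 1) =
        |deriv u s| ^ (p - 1) := by
    have hψs := hψ.pos s hs
    rw [mul_assoc, abs_rpow_sub_two_mul_self_of_nonpos hp.ne' (hu.deriv_neg hψ hp hs hsT).le]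
    field_simp
  have hψr := hψ.pos r hr
  refine (((hu.eqn r hr hrT).neg.div (hψ.hasDerivAt_pow_sub_one hn hr)
    (pow_pos hψr _).ne').congr_of_eventuallyEq ?_).congr_deriv ?_
  · filter_upwards [lt_mem_nhds hr,
      ENNReal.continuous_ofReal.continuousAt.eventually (gt_mem_nhds hrT)] with s hs hsT
    exact (hflux hs hsT).symm
  · simp only [Pi.neg_apply]
    rw [← hflux hr hrT]
    field_simp

theorem hasDerivAt_abs_deriv_rpow (hn : n ≠ 0) (hr : 0 < r) (hrT : ENNReal.ofReal r < T) :
    HasDerivAt (fun s => |deriv u s| ^ p) (p / (p - 1) * (|deriv u r| * u r ^ q -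
      ((n : ℝ) - 1) * (deriv ψ r / ψ r) * |deriv u r| ^ p)) r := by
  have hp1 : p - 1 ≠ 0 := (sub_pos.2 hp).ne'
  have hrpow (x γ : ℝ) : (|x| ^ (p - 1)) ^ γ = |x| ^ ((p - 1) * γ) :=
    (rpow_mul (abs_nonneg x) _ _).symm
  have habs : 0 < |deriv u r| := abs_pos.2 (hu.deriv_neg hψ hp hr hrT).ne
  have hderiv := (hu.hasDerivAt_abs_deriv_rpow_sub_one hψ hp hn hr hrT).rpow_const
    (p := p / (p - 1)) (Or.inl (rpow_pos_of_pos habs _).ne')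
  simp only [hrpow, mul_div_cancel₀ p hp1] at hderiv
  refine hderiv.congr_deriv ?_
  rw [show (p - 1) * (p / (p - 1) - 1) = 1 by field_simp; ring, rpow_one,
    rpow_sub_one habs.ne']
  field_simp

theorem hasDerivAt_energyF (hn : n ≠ 0) (hq : -1 < q) (hr : 0 < r)
    (hrT : ENNReal.ofReal r < T) :
    HasDerivAt (energyF p q u)
      (-(((n : ℝ) - 1) * (deriv ψ r / ψ r) * |deriv u r| ^ p)) r := by
  have hp1 : p - 1 ≠ 0 := (sub_pos.2 hp).ne'
  have hq1 : q + 1 ≠ 0 := by linarith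
  have hur := hu.pos r hr.le hrT
  have hpow := (hu.hasDerivAt hr.le hrT).rpow_const (p := q + 1) (Or.inl hur.ne')
  refine (((hu.hasDerivAt_abs_deriv_rpow hψ hp hn hr hrT).const_mul ((p - 1) / p)).add
    (hpow.div_const (q + 1))).congr_deriv ?_
  rw [add_sub_cancel_right, abs_of_neg (hu.deriv_neg hψ hp hr hrT)]
  field_simp
  ring

theorem energyF_le (hn : n ≠ 0) (hq : -1 < q) (hr : 0 < r) (hrT : ENNReal.ofReal r < T) :
    energyF p q u r ≤ α ^ (q + 1) / (q + 1) := by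
  have hle := le_of_forall_hasDerivAt_nonpos hr.le (hu.continuousOn_energyF hp hrT)
    (fun s hs => hu.hasDerivAt_energyF hψ hp hn hq hs.1
      ((ENNReal.ofReal_le_ofReal hs.2.le).trans_lt hrT))
    (fun s hs => by
      have hψs := hψ.pos s hs.1
      have hψs' := hψ.deriv_pos hs.1
      have hn1 : (0 : ℝ) ≤ n - 1 := sub_nonneg.2 (Nat.one_le_cast.2 (Nat.one_le_iff_ne_zero.2 hn))
      have : 0 ≤ ((n : ℝ) - 1) * (deriv ψ s / ψ s) * |deriv u s| ^ p := by positivity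
      linarith)
  rwa [energyF.eq_def p q u 0, hu.init, hu.deriv_init, abs_zero,
    zero_rpow (zero_lt_one.trans hp).ne', mul_zero, zero_add] at hle

theorem abs_deriv_le (hn : n ≠ 0) (hq : -1 < q) (hr : 0 < r) (hrT : ENNReal.ofReal r < T) :
    |deriv u r| ≤ (p / (p - 1) * (α ^ (q + 1) / (q + 1))) ^ (1 / p) := by
  have hp0 : 0 < p := zero_lt_one.trans hp
  have : 0 < p - 1 := sub_pos.2 hp
  have hq1 : 0 < q + 1 := by linarith
  have hur := hu.pos r hr.le hrT
  have hrpow : |deriv u r| ^ p ≤ p / (p - 1) * (α ^ (q + 1) / (q + 1)) := by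
    rw [← div_le_iff₀' (by positivity), div_div_eq_mul_div, mul_div_assoc, mul_comm]
    refine le_trans ?_ (hu.energyF_le hψ hp hn hq hr hrT)
    exact le_add_of_nonneg_right (by positivity)
  calc |deriv u r| = (|deriv u r| ^ p) ^ (1 / p) := by
        rw [one_div, rpow_rpow_inv (abs_nonneg _) hp0.ne']
    _ ≤ _ := rpow_le_rpow (by positivity) hrpow (by positivity)

theorem sub_mul_le (hn : n ≠ 0) (hq : -1 < q) (hr : 0 ≤ r) (hrT : ENNReal.ofReal r < T) :
    α - (p / (p - 1) * (α ^ (q + 1) / (q + 1))) ^ (1 / p) * r ≤ u r := by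
  have hle := le_of_forall_hasDerivAt_nonneg hr
    (f := fun s => u s + (p / (p - 1) * (α ^ (q + 1) / (q + 1))) ^ (1 / p) * s)
    ((hu.continuousOn hrT).add (by fun_prop))
    (fun s hs => (hu.hasDerivAt hs.1.le ((ENNReal.ofReal_le_ofReal hs.2.le).trans_lt hrT)).add
      ((hasDerivAt_id s).const_mul _))
    fun s hs => by
      have := hu.abs_deriv_le hψ hp hn hq hs.1 ((ENNReal.ofReal_le_ofReal hs.2.le).trans_lt hrT)
      linarith [neg_abs_le (deriv u s)]
  rw [hu.init, mul_zero, add_zero] at hle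
  linarith

theorem hasDerivAt_pohozaevP (hn : n ≠ 0) (hq : -1 < q) (hr : 0 < r)
    (hrT : ENNReal.ofReal r < T) :
    HasDerivAt (pohozaevP n p q ψ u) (Kfun n p q ψ r * |deriv u r| ^ p) r := by
  have hflux := ((hu.eqn r hr hrT).mul (hu.hasDerivAt hr.le hrT)).div_const (q + 1)
  refine ((((hψ.hasDerivAt_integral_pow (n - 1) hr).mul
    (hu.hasDerivAt_energyF hψ hp hn hq hr hrT)).add hflux).congr_of_eventuallyEq
      (Eventually.of_forall fun s => ?_)).congr_deriv ?_
  · simp only [pohozaevP, Pi.add_apply, Pi.mul_apply]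
    ring
  · have hq1 : q + 1 ≠ 0 := by linarith
    have hneg := hu.deriv_neg hψ hp hr hrT
    have habs : |deriv u r| ^ (p - 2) * deriv u r * deriv u r = |deriv u r| ^ p := by
      rw [abs_rpow_sub_two_mul_self_of_nonpos hp.ne' hneg.le, neg_mul_comm, ← abs_of_neg hneg,
        ← rpow_add_one (abs_pos.2 hneg.ne).ne', sub_add_cancel]
    simp only [Kfun, energyF, rpow_add_one (hu.pos r hr.le hrT).ne', mul_assoc] at habs ⊢
    rw [habs]
    field_simp
    ring

theorem pohozaevP_nonpos (hn : n ≠ 0) (hq : -1 < q) (hK : ∀ s, 0 < s → Kfun n p q ψ s ≤ 0)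
    (hr : 0 < r) (hrT : ENNReal.ofReal r < T) : pohozaevP n p q ψ u r ≤ 0 := by
  have hcont : ContinuousOn (pohozaevP n p q ψ u) (Set.Icc 0 r) :=
    ((hψ.continuousOn_integral_pow (n - 1) hr.le).mul (hu.continuousOn_energyF hp hrT)).add
      ((((hψ.continuousOn_pow (n - 1)).mono Set.Icc_subset_Ici_self).div_const (q + 1)).mul
        (((continuous_abs_rpow_sub_two_mul_self hp).comp_continuousOn
          (hu.continuousOn_deriv hrT)).mul (hu.continuousOn hrT)))
  have hle := le_of_forall_hasDerivAt_nonpos hr.le hcont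
    (fun s hs => hu.hasDerivAt_pohozaevP hψ hp hn hq hs.1
      ((ENNReal.ofReal_le_ofReal hs.2.le).trans_lt hrT))
    fun s hs => mul_nonpos_of_nonpos_of_nonneg (hK s hs.1) (by positivity)
  simpa [pohozaevP, hu.deriv_init] using hle

theorem neg_deriv_mul_integral_le (hn : n ≠ 0) (hq : -1 < q)
    (hK : ∀ s, 0 < s → Kfun n p q ψ s ≤ 0) (hr : 0 < r) (hrT : ENNReal.ofReal r < T) :
    -deriv u r * ∫ s in (0 : ℝ)..r, ψ s ^ (n - 1) ≤
      p / ((p - 1) * (q + 1)) * (ψ r ^ (n - 1) * u r) := by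
  have hP := hu.pohozaevP_nonpos hψ hp hn hq hK hr hrT
  have hneg := hu.deriv_neg hψ hp hr hrT
  have hq1 : 0 < q + 1 := by linarith
  have hp1 : 0 < p - 1 := sub_pos.2 hp
  have hd : 0 < |deriv u r| := abs_pos.2 hneg.ne
  have hV := hψ.integral_pow_pos (n - 1) hr
  have hur := rpow_pos_of_pos (hu.pos r hr.le hrT) (q + 1)
  rw [pohozaevP, abs_rpow_sub_two_mul_self_of_nonpos hp.ne' hneg.le] at hP
  rw [← abs_of_neg hneg]
  generalize ∫ s in (0 : ℝ)..r, ψ s ^ (n - 1) = V at *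
  have hF : (p - 1) / p * (|deriv u r| * |deriv u r| ^ (p - 1)) ≤ energyF p q u r := by
    rw [← rpow_one_add' (abs_nonneg _) (by linarith), add_sub_cancel]
    exact le_add_of_nonneg_right (by positivity)
  have hkey : V * ((p - 1) / p * |deriv u r|) * |deriv u r| ^ (p - 1) ≤
      ψ r ^ (n - 1) / (q + 1) * u r * |deriv u r| ^ (p - 1) := by
    linarith [mul_le_mul_of_nonneg_left hF hV.le]
  have hdiv := le_of_mul_le_mul_right hkey (rpow_pos_of_pos hd _)
  calc |deriv u r| * V = p / (p - 1) * (V * ((p - 1) / p * |deriv u r|)) := by field_simp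
    _ ≤ p / (p - 1) * (ψ r ^ (n - 1) / (q + 1) * u r) := by gcongr
    _ = p / ((p - 1) * (q + 1)) * (ψ r ^ (n - 1) * u r) := by field_simp

theorem mul_integral_rpow_le (hn : n ≠ 0) (hq : -1 < q)
    (hK : ∀ s, 0 < s → Kfun n p q ψ s ≤ 0) {a : ℝ} (ha : 0 < a) (har : a ≤ r)
    (hrT : ENNReal.ofReal r < T) :
    u a * (∫ s in (0 : ℝ)..a, ψ s ^ (n - 1)) ^ (p / ((p - 1) * (q + 1))) ≤
      u r * (∫ s in (0 : ℝ)..r, ψ s ^ (n - 1)) ^ (p / ((p - 1) * (q + 1))) := by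
  have hderiv : ∀ s ∈ Set.Icc a r, HasDerivAt
      (fun s => u s * (∫ t in (0 : ℝ)..s, ψ t ^ (n - 1)) ^ (p / ((p - 1) * (q + 1)))) _ s :=
    fun s hs => (hu.hasDerivAt (ha.le.trans hs.1)
      ((ENNReal.ofReal_le_ofReal hs.2).trans_lt hrT)).mul
      ((hψ.hasDerivAt_integral_pow (n - 1) (ha.trans_le hs.1)).rpow_const
        (Or.inl (hψ.integral_pow_pos (n - 1) (ha.trans_le hs.1)).ne'))
  refine le_of_forall_hasDerivAt_nonneg har
    (fun s hs => (hderiv s hs).continuousAt.continuousWithinAt)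
    (fun s hs => hderiv s (Set.Ioo_subset_Icc_self hs)) fun s hs => ?_
  have hs0 := ha.trans hs.1
  have hV := hψ.integral_pow_pos (n - 1) hs0
  have hslope := hu.neg_deriv_mul_integral_le hψ hp hn hq hK hs0
    ((ENNReal.ofReal_le_ofReal hs.2.le).trans_lt hrT)
  generalize ∫ t in (0 : ℝ)..s, ψ t ^ (n - 1) = V at *
  generalize p / ((p - 1) * (q + 1)) = C at *
  calc 0 ≤ V ^ (C - 1) * (C * (ψ s ^ (n - 1) * u s) - -deriv u s * V) :=
        mul_nonneg (by positivity) (sub_nonneg.2 hslope)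
    _ = _ := by
        rw [rpow_sub_one hV.ne']
        field_simp
        ring

end IsRadialSolution

section Existence

variable {n : ℕ} {p q α : ℝ} {ψ : ℝ → ℝ}

/-- The radial function equal to `c` for `r ≤ ρ` and to `c (V ρ / V r) ^ C` for `r ≥ ρ`, where
`V r = ∫₀ʳ ψ ^ m` is the volume function: a lower barrier for radial solutions. -/
noncomputable def volumeBarrier (m : ℕ) (ψ : ℝ → ℝ) (ρ C c r : ℝ) : ℝ :=
  c * ((∫ s in (0 : ℝ)..ρ, ψ s ^ m) / ∫ s in (0 : ℝ)..max r ρ, ψ s ^ m) ^ C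

namespace IsConvexWarping

variable {m : ℕ} {ρ C c : ℝ} (hψ : IsConvexWarping ψ) (hρ : 0 < ρ)

include hψ hρ

theorem integral_pow_max_pos (m : ℕ) (r : ℝ) : 0 < ∫ s in (0 : ℝ)..max r ρ, ψ s ^ m :=
  hψ.integral_pow_pos m (hρ.trans_le (le_max_right r ρ))

theorem continuous_volumeBarrier (m : ℕ) (hC : 0 ≤ C) (c : ℝ) :
    Continuous (volumeBarrier m ψ ρ C c) := by
  have hV : Continuous fun r => ∫ s in (0 : ℝ)..max r ρ, ψ s ^ m :=
    continuous_iff_continuousAt.2 fun r => (hψ.hasDerivAt_integral_pow m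
      (hρ.trans_le (le_max_right r ρ))).continuousAt.comp (f := fun r => max r ρ) (by fun_prop)
  exact ((continuous_const.div hV fun r => (hψ.integral_pow_max_pos hρ m r).ne').rpow_const
    fun _ => Or.inr hC).const_mul c

theorem antitone_volumeBarrier (m : ℕ) (hC : 0 ≤ C) (hc : 0 ≤ c) :
    Antitone (volumeBarrier m ψ ρ C c) := fun r s hrs => by
  have hVρ := hψ.integral_pow_pos m hρ
  have hVr := hψ.integral_pow_max_pos hρ m r
  have hVs := hψ.integral_pow_max_pos hρ m s
  have hVrs := hψ.monotoneOn_integral_pow m (hρ.trans_le (le_max_right r ρ))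
    (hρ.trans_le (le_max_right s ρ)) (max_le_max_right ρ hrs)
  simp only [volumeBarrier] at hVrs ⊢
  gcongr

theorem volumeBarrier_pos (m : ℕ) (C : ℝ) (hc : 0 < c) (r : ℝ) : 0 < volumeBarrier m ψ ρ C c r :=
  mul_pos hc (rpow_pos_of_pos
    (div_pos (hψ.integral_pow_pos m hρ) (hψ.integral_pow_max_pos hρ m r)) C)

theorem volumeBarrier_of_le (m : ℕ) (C c : ℝ) {r : ℝ} (hr : r ≤ ρ) :
    volumeBarrier m ψ ρ C c r = c := by
  rw [volumeBarrier, max_eq_right hr, div_self (hψ.integral_pow_pos m hρ).ne', one_rpow, mul_one]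

theorem volumeBarrier_le (m : ℕ) (hC : 0 ≤ C) (hc : 0 ≤ c) (r : ℝ) :
    volumeBarrier m ψ ρ C c r ≤ c :=
  (hψ.antitone_volumeBarrier hρ m hC hc (min_le_left r ρ)).trans_eq
    (hψ.volumeBarrier_of_le hρ m C c (min_le_right r ρ))

end IsConvexWarping

/- Up to the radius `ρ` the slope bound keeps `u` above `α / 2`; beyond it `u V ^ C` is
nondecreasing. -/
theorem IsRadialSolution.volumeBarrier_le {u : ℝ → ℝ} {T : ℝ≥0∞}
    (hu : IsRadialSolution n p q ψ T α u) (hψ : IsConvexWarping ψ) (hp : 1 < p) (hn : n ≠ 0)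
    (hq : -1 < q) (hK : ∀ r, 0 < r → Kfun n p q ψ r ≤ 0) {ρ : ℝ} (hρ : 0 < ρ)
    (hρα : (p / (p - 1) * (α ^ (q + 1) / (q + 1))) ^ (1 / p) * ρ ≤ α / 2) {r : ℝ} (hr : 0 ≤ r)
    (hrT : ENNReal.ofReal r < T) :
    volumeBarrier (n - 1) ψ ρ (p / ((p - 1) * (q + 1))) (α / 2) r ≤ u r := by
  have : 0 < p - 1 := sub_pos.2 hp
  have hq1 : 0 < q + 1 := by linarith
  have hα : 0 < α := hu.init ▸ hu.pos 0 le_rfl ((ENNReal.ofReal_le_ofReal hr).trans_lt hrT)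
  have hhalf {s : ℝ} (hs : 0 ≤ s) (hsρ : s ≤ ρ) (hsT : ENNReal.ofReal s < T) : α / 2 ≤ u s := by
    have hsub := hu.sub_mul_le hψ hp hn hq hs hsT
    have : (p / (p - 1) * (α ^ (q + 1) / (q + 1))) ^ (1 / p) * s ≤
      (p / (p - 1) * (α ^ (q + 1) / (q + 1))) ^ (1 / p) * ρ := by gcongr
    linarith
  rcases le_total r ρ with h | h
  · rw [hψ.volumeBarrier_of_le hρ _ _ _ h]
    exact hhalf hr h hrT
  · have hVρ := hψ.integral_pow_pos (n - 1) hρ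
    have hVr := hψ.integral_pow_pos (n - 1) (hρ.trans_le h)
    rw [volumeBarrier, max_eq_left h, div_rpow hVρ.le hVr.le, ← mul_div_assoc,
      div_le_iff₀ (rpow_pos_of_pos hVr _)]
    exact (mul_le_mul_of_nonneg_right
      (hhalf hρ.le le_rfl ((ENNReal.ofReal_le_ofReal h).trans_lt hrT)) (by positivity)).trans
      (hu.mul_integral_rpow_le hψ hp hn hq hK hρ h hrT)

theorem IsConvexWarping.exists_lower_barrier (hψ : IsConvexWarping ψ) (hp : 1 < p) (hn : n ≠ 0)
    (hq : -1 < q) (hK : ∀ r, 0 < r → Kfun n p q ψ r ≤ 0) (hα : 0 < α) :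
    ∃ δ : ℝ → ℝ, Continuous δ ∧ Antitone δ ∧ (∀ r, 0 < δ r) ∧ (∀ r, δ r ≤ α) ∧
      ∀ T u, IsRadialSolution n p q ψ T α u → ∀ r, 0 ≤ r → ENNReal.ofReal r < T → δ r ≤ u r := by
  have : 0 < p - 1 := sub_pos.2 hp
  have hq1 : 0 < q + 1 := by linarith
  have hB : 0 < (p / (p - 1) * (α ^ (q + 1) / (q + 1))) ^ (1 / p) := by positivity
  have hρ := div_pos (half_pos hα) hB
  have hC : 0 ≤ p / ((p - 1) * (q + 1)) := by positivity
  exact ⟨volumeBarrier (n - 1) ψ _ (p / ((p - 1) * (q + 1))) (α / 2),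
    hψ.continuous_volumeBarrier hρ _ hC _, hψ.antitone_volumeBarrier hρ _ hC (half_pos hα).le,
    hψ.volumeBarrier_pos hρ _ _ (half_pos hα),
    fun r => (hψ.volumeBarrier_le hρ _ hC (half_pos hα).le r).trans (half_le_self hα.le),
    fun T u hu r => hu.volumeBarrier_le hψ hp hn hq hK hρ (mul_div_cancel₀ _ hB.ne').le⟩

theorem IsConvexWarping.isRadialSolution_radialProfile (hψ : IsConvexWarping ψ) (hn : n - 1 ≠ 0)
    (hp : 1 < p) {f u : ℝ → ℝ} (hf : Continuous f)
    (hu : u = radialProfile (fun r => ψ (max r 0) ^ (n - 1)) (1 / (p - 1)) α f) {T : ℝ≥0∞}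
    (hfu : ∀ r, 0 ≤ r → ENNReal.ofReal r < T → 0 < u r ∧ f r = u r ^ q) :
    IsRadialSolution n p q ψ T α u := by
  have hw := hψ.isRadialWeight hn
  have hp1 : 0 < p - 1 := sub_pos.2 hp
  have hβ : 0 < 1 / (p - 1) := one_div_pos.2 hp1
  have hderiv (r : ℝ) := hu ▸ hw.hasDerivAt_radialProfile hf hβ.le α r
  have hderiv_eq := funext fun r => (hderiv r).deriv
  refine ⟨?_, ?_, fun r hr hrT => (hfu r hr hrT).1, fun r _ _ => (hderiv r).differentiableAt, ?_,
    fun r hr hrT => ?_⟩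
  · rw [hu, hw.radialProfile_of_nonpos hβ α f le_rfl]
  · rw [(hderiv 0).deriv, hw.radialFlux_of_nonpos f le_rfl, zero_rpow hβ.ne', neg_zero]
  · rw [hderiv_eq]
    exact (hw.continuous_radialFlux_rpow hf hβ.le).neg.continuousOn
  · have hflux_deriv := (hw.hasDerivAt_integral_mul hf r).neg
    rw [(hfu r hr.le hrT).2, max_eq_left hr.le] at hflux_deriv
    refine hflux_deriv.congr_of_eventuallyEq ?_
    filter_upwards [lt_mem_nhds hr,
      ENNReal.continuous_ofReal.continuousAt.eventually (gt_mem_nhds hrT)] with s hs hsT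
    have hflux : 0 < radialFlux (fun r => ψ (max r 0) ^ (n - 1)) f s :=
      hw.radialFlux_pos hf hs fun t ht hts => by
        obtain ⟨hut, hft⟩ := hfu t ht.le ((ENNReal.ofReal_le_ofReal hts.le).trans_lt hsT)
        exact hft ▸ rpow_pos_of_pos hut q
    have hψs := (hψ.pos s hs).ne'
    rw [hderiv_eq, mul_assoc, abs_rpow_sub_two_mul_self_of_nonpos hp.ne'
      (neg_nonpos.2 (rpow_nonneg hflux.le _)), abs_neg, abs_of_pos (rpow_pos_of_pos hflux _),
      one_div, rpow_inv_rpow hflux.le hp1.ne', radialFlux, max_eq_left hs.le, mul_neg]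
    simp only [Pi.neg_apply]
    field_simp

theorem IsConvexWarping.exists_isRadialSolution_top (hψ : IsConvexWarping ψ) (hn : n - 1 ≠ 0)
    (hp : 1 < p) (hq : 0 < q) {δ : ℝ → ℝ} (hδ : Continuous δ) (hδ_anti : Antitone δ)
    (hδ_pos : ∀ r, 0 < δ r) (hδα : ∀ r, δ r ≤ α)
    (hbarrier : ∀ T u, IsRadialSolution n p q ψ T α u →
      ∀ r, 0 ≤ r → ENNReal.ofReal r < T → δ r ≤ u r) :
    ∃ u, IsRadialSolution n p q ψ ⊤ α u := by
  have hw := hψ.isRadialWeight hn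
  have hβ : 0 < 1 / (p - 1) := one_div_pos.2 (sub_pos.2 hp)
  obtain ⟨h, hh, hh_eq⟩ := hw.exists_truncated_profile (α := α) hβ hq (hδ.div_const 2)
    (fun r s hrs => div_le_div_of_nonneg_right (hδ_anti hrs) zero_le_two)
    (fun r => half_pos (hδ_pos r)) (fun r => (half_le_self (hδ_pos r).le).trans (hδα r))
  have hf : Continuous fun s => h s ^ q := hh.rpow_const fun _ => Or.inr hq.le
  obtain ⟨u, hu⟩ : ∃ u, u = radialProfile (fun r => ψ (max r 0) ^ (n - 1)) (1 / (p - 1)) α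
    fun s => h s ^ q := ⟨_, rfl⟩
  have hu_cont : Continuous u := continuous_iff_continuousAt.2 fun r =>
    hu ▸ (hw.hasDerivAt_radialProfile hf hβ.le α r).continuousAt
  have hu_sol {T : ℝ≥0∞} (hT : ∀ r, 0 ≤ r → ENNReal.ofReal r < T → δ r / 2 < u r) :
      IsRadialSolution n p q ψ T α u :=
    hψ.isRadialSolution_radialProfile hn hp hf hu fun r hr hrT => by
      have hur := hT r hr hrT
      refine ⟨(half_pos (hδ_pos r)).trans hur, ?_⟩
      rw [hh_eq, ← hu, max_eq_right hur.le]
  have hu0 : δ 0 / 2 < u 0 := by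
    rw [hu, hw.radialProfile_of_nonpos hβ α _ le_rfl]
    exact (half_lt_self (hδ_pos 0)).trans_le (hδα 0)
  refine ⟨u, hu_sol fun r hr _ => ?_⟩
  refine forall_lt_of_forall_Ico_lt (hδ.div_const 2) hu_cont hu0 (fun R hR hlt => ?_) r hr
  have hsol : IsRadialSolution n p q ψ (ENNReal.ofReal R) α u := hu_sol fun s hs hsR =>
    hlt s ⟨hs, (ENNReal.ofReal_lt_ofReal_iff hR).1 hsR⟩
  have hδR : R ∈ {s | δ s ≤ u s} := closure_minimal
    (fun s hs => hbarrier _ u hsol s hs.1 ((ENNReal.ofReal_lt_ofReal_iff hR).2 hs.2))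
    (isClosed_le hδ hu_cont) (closure_Ico hR.ne ▸ Set.right_mem_Icc.2 hR.le)
  exact (half_lt_self (hδ_pos R)).trans_le hδR

theorem pos_of_mul_div_sub_one_le {N : ℝ} (hp : 1 < p) (hpN : p < N)
    (hq : N * p / (N - p) - 1 ≤ q) : 0 < q := by
  have hN : 0 < N - p := sub_pos.2 hpN
  have : p < N * p / (N - p) := by
    rw [lt_div_iff₀ hN]
    nlinarith
  linarith

theorem sub_one_div_add_one_div_le {N : ℝ} (hp : 0 < p) (hpN : p < N)
    (hq : N * p / (N - p) - 1 ≤ q) : (p - 1) / p + 1 / (q + 1) ≤ (N - 1) / N := by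
  have : 0 < N - p := sub_pos.2 hpN
  have hN : 0 < N := hp.trans hpN
  calc (p - 1) / p + 1 / (q + 1) ≤ (p - 1) / p + 1 / (N * p / (N - p)) := by
        gcongr
        linarith
    _ = (N - 1) / N := by
        field_simp
        ring

end Existence

theorem statement_3_general (n : ℕ) (p q : ℝ) (hp1 : 1 < p) (hpn : p < n)
    (hq : (n : ℝ) * p / ((n : ℝ) - p) - 1 ≤ q) (ψ : ℝ → ℝ) (hψ : IsConvexWarping ψ) :
    (∀ α : ℝ, 0 < α → ∃ u : ℝ → ℝ, IsRadialSolution n p q ψ ⊤ α u) ∧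
      ∀ (α : ℝ) (u : ℝ → ℝ), IsRadialSolution n p q ψ ⊤ α u →
        (∀ r : ℝ, 0 ≤ r → 0 < u r) ∧ ∀ r : ℝ, 0 < r → deriv u r < 0 := by
  refine ⟨fun α hα => ?_, fun α u hu => ⟨fun r hr => hu.pos r hr ENNReal.ofReal_lt_top,
    fun r hr => hu.deriv_neg hψ hp1 hr ENNReal.ofReal_lt_top⟩⟩
  have hn : 1 < n := by exact_mod_cast hp1.trans hpn
  have hq0 : 0 < q := pos_of_mul_div_sub_one_le hp1 hpn hq
  have hK : ∀ r, 0 < r → Kfun n p q ψ r ≤ 0 := fun r hr =>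
    hψ.Kfun_nonpos (by omega) (sub_one_div_add_one_div_le (by linarith) hpn hq) hr
  obtain ⟨δ, hδ, hδ_anti, hδ_pos, hδα, hbarrier⟩ :=
    hψ.exists_lower_barrier hp1 (by omega) (by linarith) hK hα
  exact hψ.exists_isRadialSolution_top (by omega) hp1 hq0 hδ hδ_anti hδ_pos hδα hbarrier

/-- global existence of radial solutions; positivity and strict
monotonicity of every global radial solution. -/
theorem statement_3 (n : ℕ) (hn : 2 ≤ n) (p q : ℝ) (hp1 : 1 < p) (hpn : p < n)
    (hq : (n : ℝ) * p / ((n : ℝ) - p) - 1 ≤ q)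
    (ψ : ℝ → ℝ) (hψ : IsCHModel ψ) :
    (∀ α : ℝ, 0 < α → ∃ u : ℝ → ℝ, IsRadialSolution n p q ψ ⊤ α u) ∧
      ∀ α : ℝ, 0 < α → ∀ u : ℝ → ℝ, IsRadialSolution n p q ψ ⊤ α u →
        (∀ r : ℝ, 0 ≤ r → 0 < u r) ∧ ∀ r : ℝ, 0 < r → deriv u r < 0 :=
  (statement_3_general n p q hp1 hpn hq ψ hψ.isConvexWarping).imp_right fun h α _ => h α
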